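/- Let 𝓔 be an abelian category, n ≥ 1, M an n-cluster tilting subcategory of 𝓔, and let ξ : 0 → X⁰ → E¹ → E² → ⋯ → Eⁿ → X^{n+1} → 0 be an exact sequence in 𝓔 with X⁰, X^{n+1} ∈ M (the middle terms E^i arbitrary objects of 𝓔). Then there exists an n-exact sequence 0 → X⁰ → X¹ → X² → ⋯ → Xⁿ → X^{n+1} → 0 with all terms X^i in M whose Yoneda class in Extⁿ(X^{n+1},X⁰) equals [ξ]; that is, ξ is Yoneda equivalent to an n-exact sequence in M. -/

import Mathlib

open CategoryTheory CategoryTheory.Abelian CategoryTheory.Limits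

universe w v u

namespace NZPaper

variable {C : Type u} [Category.{v} C] [Abelian C] [HasExt.{w} C]

/-- A full (iso-closed) subcategory, encoded as a set of objects, is `n`-cluster tilting if it
admits monic left approximations and epic right approximations and is characterized by the
vanishing of `Ext^i` for `1 ≤ i ≤ n-1` on either side. -/
def IsNClusterTilting (n : ℕ) (M : Set C) : Prop :=
  (∀ ⦃X Y : C⦄, (X ≅ Y) → X ∈ M → Y ∈ M) ∧
  (∀ E : C, ∃ (X : C) (f : E ⟶ X), X ∈ M ∧ Mono f ∧
      ∀ X' ∈ M, ∀ g : E ⟶ X', ∃ h : X ⟶ X', f ≫ h = g) ∧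
  (∀ E : C, ∃ (X : C) (f : X ⟶ E), X ∈ M ∧ Epi f ∧
      ∀ X' ∈ M, ∀ g : X' ⟶ E, ∃ h : X' ⟶ X, h ≫ f = g) ∧
  (∀ E : C, E ∈ M ↔ ∀ Y ∈ M, ∀ i : ℕ, 1 ≤ i → i < n → ∀ e : Ext E Y i, e = 0) ∧
  (∀ E : C, E ∈ M ↔ ∀ Y ∈ M, ∀ i : ℕ, 1 ≤ i → i < n → ∀ e : Ext Y E i, e = 0)

/-- An `nℤ`-cluster tilting subcategory: in addition `Ext^k` vanishes on `M` for every
`k ≥ 1` not divisible by `n`. -/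
def IsNZClusterTilting (n : ℕ) (M : Set C) : Prop :=
  IsNClusterTilting n M ∧
  ∀ X ∈ M, ∀ Y ∈ M, ∀ k : ℕ, 1 ≤ k → ¬ (n ∣ k) → ∀ e : Ext X Y k, e = 0

/-- An exact sequence `0 → Y 0 → Y 1 → ⋯ → Y m → Y (m+1) → 0` in an abelian category,
recorded together with its canonical splicing into short exact sequences
`0 → K i → Y (i+1) → K (i+1) → 0` (`K i` is the image of `d i` for `1 ≤ i ≤ m`,
`K 0 = Y 0` and `K m = Y (m+1)`).  Only the indices `0, …, m+1` (resp. `0, …, m`) of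
`Y` (resp. of the differentials and of `K`) are relevant; the remaining values are junk
(any such exact sequence can be padded by zero objects). -/
structure ExactExtension (C : Type u) [Category.{v} C] [Abelian C] (m : ℕ) where
  Y : ℕ → C
  d : ∀ i, Y i ⟶ Y (i + 1)
  K : ℕ → C
  ι : ∀ i, K i ⟶ Y (i + 1)
  π : ∀ i, Y i ⟶ K i
  hK0 : K 0 = Y 0
  hKm : K m = Y (m + 1)
  zero : ∀ i, ι i ≫ π (i + 1) = 0
  shortExact : ∀ i, (ShortComplex.mk (ι i) (π (i + 1)) (zero i)).ShortExact
  d0_eq : eqToHom hK0 ≫ d 0 = ι 0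
  dmid_eq : ∀ i, 1 ≤ i → i + 1 ≤ m → d i = π i ≫ ι i
  dlast_eq : d m = π m ≫ eqToHom hKm

/-- The Yoneda class of the chain of the first `j` short exact sequences,
obtained as the Yoneda composite of their `Ext¹`-classes. -/
noncomputable def ExactExtension.chainClass {m : ℕ} (T : ExactExtension C m) :
    ∀ j : ℕ, Ext (T.K j) (T.K 0) j
  | 0 => Ext.mk₀ (𝟙 _)
  | (j + 1) => ((T.shortExact j).extClass).comp (T.chainClass j) (by omega)

/-- The Yoneda class `[ξ] ∈ Ext^m (Y (m+1)) (Y 0)` of the exact sequence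
`0 → Y 0 → ⋯ → Y (m+1) → 0`, i.e. the Yoneda composite of the `Ext¹`-classes of the
short exact sequences obtained by splicing it at its images. -/
noncomputable def ExactExtension.extClass {m : ℕ} (T : ExactExtension C m) :
    Ext (T.Y (m + 1)) (T.Y 0) m :=
  (Ext.mk₀ (eqToHom T.hKm.symm)).comp
    ((T.chainClass m).comp (Ext.mk₀ (eqToHom T.hK0)) (add_zero m)) (zero_add m)

/-- Transport of an `Ext`-class along equalities of objects. -/
noncomputable def extTransport {X X' Z Z' : C} {a : ℕ} (e : Ext X Z a)
    (hX : X = X') (hZ : Z = Z') : Ext X' Z' a :=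
  (Ext.mk₀ (eqToHom hX.symm)).comp (e.comp (Ext.mk₀ (eqToHom hZ)) (add_zero a)) (zero_add a)

/-- Exactness, at every spot, of the long sequence of abelian groups
`0 → Hom(X,Y⁰) → ⋯ → Hom(X,Y^{n+1}) → Extⁿ(X,Y⁰) → ⋯ → Extⁿ(X,Y^{n+1}) → Ext^{2n}(X,Y⁰) → ⋯`
(`Ext⁰ = Hom`), where within each row the maps are induced by the differentials of `T` and each
connecting map `Ext^{kn}(X,Y^{n+1}) → Ext^{(k+1)n}(X,Y⁰)` is Yoneda composition with the class
`[T] ∈ Extⁿ(Y^{n+1},Y⁰)`. -/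
def CovLES (n : ℕ) (X : C) (T : ExactExtension C n) : Prop :=
  (Function.Injective fun e : Ext X (T.Y 0) 0 => e.comp (Ext.mk₀ (T.d 0)) (add_zero 0)) ∧
  (∀ k i : ℕ, i < n → Function.Exact
      (fun e : Ext X (T.Y i) (k * n) => e.comp (Ext.mk₀ (T.d i)) (add_zero _))
      (fun e : Ext X (T.Y (i + 1)) (k * n) => e.comp (Ext.mk₀ (T.d (i + 1))) (add_zero _))) ∧
  (∀ k : ℕ, Function.Exact
      (fun e : Ext X (T.Y n) (k * n) => e.comp (Ext.mk₀ (T.d n)) (add_zero _))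
      (fun e : Ext X (T.Y (n + 1)) (k * n) =>
        e.comp T.extClass (show k * n + n = (k + 1) * n by ring))) ∧
  (∀ k : ℕ, Function.Exact
      (fun e : Ext X (T.Y (n + 1)) (k * n) =>
        e.comp T.extClass (show k * n + n = (k + 1) * n by ring))
      (fun e : Ext X (T.Y 0) ((k + 1) * n) => e.comp (Ext.mk₀ (T.d 0)) (add_zero _)))

/-- Exactness, at every spot, of the long sequence of abelian groups
`0 → Hom(Y^{n+1},Z) → ⋯ → Hom(Y⁰,Z) → Extⁿ(Y^{n+1},Z) → ⋯ → Extⁿ(Y⁰,Z) → Ext^{2n}(Y^{n+1},Z) → ⋯`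
(`Ext⁰ = Hom`), where within each row the maps are induced by the differentials of `T` and each
connecting map `Ext^{kn}(Y⁰,Z) → Ext^{(k+1)n}(Y^{n+1},Z)` is Yoneda precomposition with the class
`[T] ∈ Extⁿ(Y^{n+1},Y⁰)`. -/
def ContraLES (n : ℕ) (Z : C) (T : ExactExtension C n) : Prop :=
  (Function.Injective fun e : Ext (T.Y (n + 1)) Z 0 => (Ext.mk₀ (T.d n)).comp e (zero_add 0)) ∧
  (∀ k i : ℕ, i < n → Function.Exact
      (fun e : Ext (T.Y (i + 2)) Z (k * n) => (Ext.mk₀ (T.d (i + 1))).comp e (zero_add _))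
      (fun e : Ext (T.Y (i + 1)) Z (k * n) => (Ext.mk₀ (T.d i)).comp e (zero_add _))) ∧
  (∀ k : ℕ, Function.Exact
      (fun e : Ext (T.Y 1) Z (k * n) => (Ext.mk₀ (T.d 0)).comp e (zero_add _))
      (fun e : Ext (T.Y 0) Z (k * n) =>
        T.extClass.comp e (show n + k * n = (k + 1) * n by ring))) ∧
  (∀ k : ℕ, Function.Exact
      (fun e : Ext (T.Y 0) Z (k * n) =>
        T.extClass.comp e (show n + k * n = (k + 1) * n by ring))
      (fun e : Ext (T.Y (n + 1)) Z ((k + 1) * n) => (Ext.mk₀ (T.d n)).comp e (zero_add _)))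

end NZPaper

/-!
The sequence is built from the left, peeling off one short exact sequence at a time.  Let
`j : K ⟶ X` be a monic left approximation, by objects of `M`, among the maps killing
`η ∈ Ext^{r+1}(B, K)`.  Then `η` is the composite of some `η' ∈ Ext^r(B, coker j)` with the class of
`0 → K → X → coker j → 0`, and `η'` inherits from `η` the property that composition with it is
injective on `Ext^i(-, Y)` for `Y ∈ M` and `1 ≤ i < n`.  In degree one this injectivity forces the
middle term of an extension with class `η` into `M`.

In degrees below `n` any left approximation kills `η`, because `B ∈ M`.  In degree `n` the required
approximation exists because `[ξ]` is killed by an epimorphism from an object of `M`, namely one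
onto `Eⁿ` followed by `Eⁿ ⟶ X^{n+1}`: dimension shifting along such epimorphisms brings the degree
down to one, where a pushout provides it.
-/

namespace NZPaper

section ShortExact

variable {C : Type u} [Category.{v} C] [Abelian C]

lemma shortExact_cokernel {A X : C} (f : A ⟶ X) [Mono f] :
    (ShortComplex.mk f (cokernel.π f) (cokernel.condition f)).ShortExact :=
  .mk' (ShortComplex.exact_cokernel f) ‹_› (inferInstanceAs (Epi (cokernel.π f)))

lemma shortExact_kernel {X A : C} (p : X ⟶ A) [Epi p] :
    (ShortComplex.mk (kernel.ι p) p (kernel.condition p)).ShortExact :=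
  .mk' (ShortComplex.exact_kernel p) (inferInstanceAs (Mono (kernel.ι p))) ‹_›

lemma shortExact_pullback {S : ShortComplex C} (hS : S.ShortExact) {B : C} (q : B ⟶ S.X₃) :
    (ShortComplex.mk (pullback.lift S.f 0 (by simp)) (pullback.snd S.g q)
      (pullback.lift_snd _ _ _)).ShortExact := by
  have := hS.mono_f
  have := hS.epi_g
  have hmono : Mono (pullback.lift S.f 0 (by simp) : S.X₁ ⟶ pullback S.g q) :=
    mono_of_mono_fac (pullback.lift_fst _ _ _)
  refine .mk' (ShortComplex.exact_of_f_is_kernel _ (KernelFork.IsLimit.ofι' _ _ fun k hk => ?_))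
    hmono (inferInstanceAs (Epi (pullback.snd S.g q)))
  have hk' : (k ≫ pullback.fst S.g q) ≫ S.g = 0 := by
    rw [Category.assoc, pullback.condition, reassoc_of% hk, zero_comp]
  refine ⟨hS.exact.lift _ hk', pullback.hom_ext ?_ ?_⟩
  · rw [Category.assoc, pullback.lift_fst, hS.exact.lift_f]
  · rw [Category.assoc, pullback.lift_snd, comp_zero]
    exact hk.symm

end ShortExact

section Splicing

variable {C : Type u} [Category.{v} C] [Abelian C]

open ZeroObject in
/-- A short exact sequence as an exact extension of length one, padded by zero objects. -/
noncomputable def ExactExtension.ofShortExact {A X B : C} {f : A ⟶ X} {g : X ⟶ B} {w : f ≫ g = 0}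
    (hS : (ShortComplex.mk f g w).ShortExact) : ExactExtension C 1 where
  Y := fun | 0 => A | 1 => X | 2 => B | _ + 3 => 0
  d := fun | 0 => f | 1 => g | 2 => 0 | _ + 3 => 0
  K := fun | 0 => A | 1 => B | _ + 2 => 0
  ι := fun | 0 => f | 1 => 𝟙 B | _ + 2 => 0
  π := fun | 0 => 𝟙 A | 1 => g | 2 => 0 | _ + 3 => 0
  hK0 := rfl
  hKm := rfl
  zero := fun | 0 => w | 1 => comp_zero | _ + 2 => comp_zero
  shortExact := fun
    | 0 => hS
    | 1 => (ShortComplex.Splitting.ofIsIsoOfIsZero _ (inferInstanceAs (IsIso (𝟙 B)))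
        (isZero_zero C)).shortExact
    | _ + 2 => (ShortComplex.Splitting.ofIsZeroOfIsIso _ (isZero_zero C)
        (inferInstanceAs (IsIso (0 : (0 : C) ⟶ 0)))).shortExact
  d0_eq := Category.id_comp f
  dmid_eq := by omega
  dlast_eq := (Category.comp_id g).symm

/-- Splicing a short exact sequence `0 → A → X → K → 0` to the left of an exact extension of
positive length starting at `K`.  Length zero is excluded: there `T.ι 0` may be any isomorphism,
whereas the last differential has to be `π` up to an equality of objects. -/
def ExactExtension.cons {m : ℕ} (T : ExactExtension C (m + 1)) {A X : C} {f : A ⟶ X}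
    {g : X ⟶ T.K 0} {w : f ≫ g = 0} (hS : (ShortComplex.mk f g w).ShortExact) :
    ExactExtension C (m + 2) where
  Y := fun | 0 => A | 1 => X | i + 2 => T.Y (i + 1)
  d := fun | 0 => f | 1 => g ≫ T.ι 0 | i + 2 => T.d (i + 1)
  K := fun | 0 => A | i + 1 => T.K i
  ι := fun | 0 => f | i + 1 => T.ι i
  π := fun | 0 => 𝟙 A | 1 => g | i + 2 => T.π (i + 1)
  hK0 := rfl
  hKm := T.hKm
  zero := fun | 0 => w | i + 1 => T.zero i
  shortExact := fun | 0 => hS | i + 1 => T.shortExact i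
  d0_eq := Category.id_comp f
  dmid_eq := fun
    | 0, h, _ => absurd h (by omega)
    | 1, _, _ => rfl
    | i + 2, _, h => T.dmid_eq (i + 1) (by omega) (by omega)
  dlast_eq := T.dlast_eq

lemma ExactExtension.epi_d_last {m : ℕ} (T : ExactExtension C (m + 1)) : Epi (T.d (m + 1)) := by
  have : Epi (T.π (m + 1)) := (T.shortExact m).epi_g
  rw [T.dlast_eq]
  infer_instance

end Splicing

variable {C : Type u} [Category.{v} C] [Abelian C] [HasExt.{w} C]

section YonedaClass

lemma extTransport_refl {X Z : C} {a : ℕ} (e : Ext X Z a) : extTransport e rfl rfl = e := by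
  simp [extTransport]

lemma extTransport_trans {X X' X'' Z Z' Z'' : C} {a : ℕ} (e : Ext X Z a) (hX : X = X')
    (hX' : X' = X'') (hZ : Z = Z') (hZ' : Z' = Z'') :
    extTransport (extTransport e hX hZ) hX' hZ' =
      extTransport e (hX.trans hX') (hZ.trans hZ') := by
  subst hX hX' hZ hZ'
  exact extTransport_refl _

lemma ExactExtension.ofShortExact_chainClass_one {A X B : C} {f : A ⟶ X} {g : X ⟶ B}
    {w : f ≫ g = 0} (hS : (ShortComplex.mk f g w).ShortExact) :
    (ofShortExact hS).chainClass 1 = hS.extClass :=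
  Ext.comp_mk₀_id _

lemma ExactExtension.cons_chainClass_succ {m : ℕ} (T : ExactExtension C (m + 1)) {A X : C}
    {f : A ⟶ X} {g : X ⟶ T.K 0} {w : f ≫ g = 0} (hS : (ShortComplex.mk f g w).ShortExact)
    (j : ℕ) : (T.cons hS).chainClass (j + 1) = (T.chainClass j).comp hS.extClass rfl := by
  induction j with
  | zero => exact (Ext.comp_mk₀_id _).trans (Ext.mk₀_id_comp _).symm
  | succ j ih =>
    change (T.shortExact j).extClass.comp ((T.cons hS).chainClass (j + 1)) (by omega) = _
    rw [ih]
    exact (Ext.comp_assoc _ _ _ _ _ (by omega)).symm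

lemma ExactExtension.mk₀_d_comp_extClass {m : ℕ} (T : ExactExtension C (m + 1)) :
    (Ext.mk₀ (T.d (m + 1))).comp T.extClass (zero_add (m + 1)) = 0 := by
  have h : (Ext.mk₀ (T.π (m + 1))).comp (T.chainClass (m + 1)) (zero_add (m + 1)) = 0 :=
    (T.shortExact m).comp_extClass_assoc (T.chainClass m) (by omega)
  rw [extClass, Ext.mk₀_comp_mk₀_assoc, T.dlast_eq, Category.assoc, eqToHom_trans, eqToHom_refl,
    Category.comp_id, ← Ext.comp_assoc_of_third_deg_zero, h, Ext.zero_comp]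

/-- `η ∈ Ext^m(B, A)` is the Yoneda class of an exact sequence whose `m` middle terms lie in `M`.
The ends are compared with `A` and `B` through `K 0` and `K m`, so that `chainClass` applies. -/
def IsYonedaClassOf (M : Set C) {A B : C} {m : ℕ} (η : Ext B A m) : Prop :=
  ∃ (T : ExactExtension C m) (hA : T.K 0 = A) (hB : T.K m = B),
    (∀ i, 1 ≤ i → i ≤ m → T.Y i ∈ M) ∧ extTransport (T.chainClass m) hB hA = η

variable {M : Set C}

lemma isYonedaClassOf_extClass {A X B : C} {f : A ⟶ X} {g : X ⟶ B} {w : f ≫ g = 0}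
    (hS : (ShortComplex.mk f g w).ShortExact) (hX : X ∈ M) : IsYonedaClassOf M hS.extClass := by
  refine ⟨.ofShortExact hS, rfl, rfl, fun i h1 h2 => ?_, ?_⟩
  · obtain rfl : i = 1 := by omega
    exact hX
  · rw [ExactExtension.ofShortExact_chainClass_one]
    exact extTransport_refl _

lemma IsYonedaClassOf.comp_extClass {A X K B : C} {f : A ⟶ X} {g : X ⟶ K} {w : f ≫ g = 0}
    (hS : (ShortComplex.mk f g w).ShortExact) (hX : X ∈ M) {m : ℕ} {η : Ext B K (m + 1)}
    (hη : IsYonedaClassOf M η) : IsYonedaClassOf M (η.comp hS.extClass rfl) := by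
  obtain ⟨T, rfl, rfl, hT, rfl⟩ := hη
  refine ⟨T.cons hS, rfl, rfl, ?_, ?_⟩
  · rintro (_ | _ | i) h1 h2
    · omega
    · exact hX
    · exact hT (i + 1) (by omega) (by omega)
  · rw [ExactExtension.cons_chainClass_succ, extTransport_refl]
    exact extTransport_refl _

lemma IsYonedaClassOf.exists_extClass_eq {A B : C} {m : ℕ} {η : Ext B A m}
    (hη : IsYonedaClassOf M η) (hA : A ∈ M) (hB : B ∈ M) :
    ∃ (T : ExactExtension C m) (e0 : T.Y 0 = A) (e1 : T.Y (m + 1) = B),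
      (∀ i ≤ m + 1, T.Y i ∈ M) ∧ extTransport T.extClass e1 e0 = η := by
  obtain ⟨T, hKA, hKB, hT, hη⟩ := hη
  have e0 : T.Y 0 = A := T.hK0.symm.trans hKA
  have e1 : T.Y (m + 1) = B := T.hKm.symm.trans hKB
  refine ⟨T, e0, e1, fun i hi => ?_, (extTransport_trans _ T.hKm e1 T.hK0 e0).trans hη⟩
  obtain rfl | hi' | rfl : i = 0 ∨ (1 ≤ i ∧ i ≤ m) ∨ i = m + 1 := by omega
  · exact e0 ▸ hA
  · exact hT i hi'.1 hi'.2
  · exact e1 ▸ hB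

end YonedaClass

section Approximation

lemma IsNClusterTilting.ext_eq_zero {n : ℕ} {M : Set C} (hM : IsNClusterTilting n M) {X Y : C}
    (hX : X ∈ M) (hY : Y ∈ M) {i : ℕ} (h1 : 1 ≤ i) (hi : i < n) (e : Ext X Y i) : e = 0 :=
  (hM.2.2.2.1 X).1 hX Y hY i h1 hi e

lemma IsNClusterTilting.mem_of_ext_eq_zero {n : ℕ} {M : Set C} (hM : IsNClusterTilting n M)
    {E : C} (hE : ∀ Y ∈ M, ∀ i, 1 ≤ i → i < n → ∀ e : Ext E Y i, e = 0) : E ∈ M :=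
  (hM.2.2.2.1 E).2 hE

lemma IsNClusterTilting.exists_epi {n : ℕ} {M : Set C} (hM : IsNClusterTilting n M) (E : C) :
    ∃ (X : C) (p : X ⟶ E), X ∈ M ∧ Epi p :=
  let ⟨X, p, hX, hp, _⟩ := hM.2.2.1 E
  ⟨X, p, hX, hp⟩

/-- `j` is a monic left `M`-approximation relative to `η`: it kills `η`, and every map to an object
of `M` killing `η` factors through it.  This approximates the subfunctor
`Y ↦ {g | η.comp (mk₀ g) = 0}` of `Hom(A, -)` on `M` instead of `Hom(A, -)` itself. -/
structure IsKillingApprox (M : Set C) {A K : C} {r : ℕ} (η : Ext K A r) {X : C} (j : A ⟶ X) :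
    Prop where
  mem : X ∈ M
  mono : Mono j
  comp_eq_zero : η.comp (Ext.mk₀ j) (add_zero r) = 0
  exists_fac : ∀ Y ∈ M, ∀ g : A ⟶ Y, η.comp (Ext.mk₀ g) (add_zero r) = 0 → ∃ h : X ⟶ Y, j ≫ h = g

lemma IsNClusterTilting.exists_isKillingApprox_of_lt {n : ℕ} {M : Set C}
    (hM : IsNClusterTilting n M) {B : C} (hB : B ∈ M) {K : C} {r : ℕ} (hr : 1 ≤ r) (hrn : r < n)
    (η : Ext B K r) : ∃ (X : C) (j : K ⟶ X), IsKillingApprox M η j := by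
  obtain ⟨X, j, hX, hj, hfac⟩ := hM.2.1 K
  exact ⟨X, j, hX, hj, hM.ext_eq_zero hB hX hr hrn _, fun Y hY g _ => hfac Y hY g⟩

lemma IsKillingApprox.extClass_comp {M : Set C} {S : ShortComplex C} (hS : S.ShortExact) {A : C}
    {r m : ℕ} (h : 1 + r = m) (hS₂ : ∀ Y ∈ M, ∀ e : Ext S.X₂ Y r, e = 0) {x : Ext S.X₁ A r} {X : C}
    {j : A ⟶ X} (hj : IsKillingApprox M x j) : IsKillingApprox M (hS.extClass.comp x h) j where
  mem := hj.mem
  mono := hj.mono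
  comp_eq_zero := by rw [Ext.comp_assoc_of_third_deg_zero, hj.comp_eq_zero, Ext.comp_zero]
  exists_fac Y hY g hg := by
    rw [Ext.comp_assoc_of_third_deg_zero] at hg
    obtain ⟨z, hz⟩ := Ext.contravariant_sequence_exact₁ hS _ _ h hg
    refine hj.exists_fac Y hY g ?_
    rw [← hz, hS₂ Y hY z, Ext.comp_zero]

lemma IsNClusterTilting.exists_isKillingApprox_extClass_comp {n : ℕ} {M : Set C}
    (hM : IsNClusterTilting n M) {S : ShortComplex C} (hS : S.ShortExact) {A : C} (x : S.X₁ ⟶ A) :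
    ∃ (X : C) (j : A ⟶ X),
      IsKillingApprox M (hS.extClass.comp (Ext.mk₀ x) (add_zero 1)) j := by
  have := hS.mono_f
  obtain ⟨X, a, hX, ha, hfac⟩ := hM.2.1 (pushout S.f x)
  refine ⟨X, pushout.inr S.f x ≫ a, hX, mono_comp _ _, ?_, fun Y hY g hg => ?_⟩
  · rw [Ext.comp_assoc_of_third_deg_zero, Ext.mk₀_comp_mk₀, ← Category.assoc, ← pushout.condition,
      Category.assoc, ← Ext.mk₀_comp_mk₀, hS.extClass_comp_assoc]
  · rw [Ext.comp_assoc_of_third_deg_zero, Ext.mk₀_comp_mk₀] at hg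
    obtain ⟨z, hz⟩ := Ext.contravariant_sequence_exact₁ hS _ _ rfl hg
    obtain ⟨z, rfl⟩ := (Ext.mk₀_bijective _ _).2 z
    rw [Ext.mk₀_comp_mk₀] at hz
    obtain ⟨h, hh⟩ := hfac Y hY (pushout.desc z g ((Ext.mk₀_bijective _ _).1 hz))
    exact ⟨h, by rw [Category.assoc, hh, pushout.inr_desc]⟩

lemma IsNClusterTilting.exists_isKillingApprox_of_epi {n : ℕ} {M : Set C}
    (hM : IsNClusterTilting n M) {A : C} (hA : A ∈ M) {r : ℕ} (hr : r + 1 ≤ n) {X K : C}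
    (hX : X ∈ M) (p : X ⟶ K) [Epi p] (η : Ext K A (r + 1))
    (hη : (Ext.mk₀ p).comp η (zero_add (r + 1)) = 0) :
    ∃ (X' : C) (j : A ⟶ X'), IsKillingApprox M η j := by
  induction r generalizing X K with
  | zero =>
    obtain ⟨x, rfl⟩ :=
      Ext.contravariant_sequence_exact₃ (shortExact_kernel p) A η hη (n₀ := 0) rfl
    obtain ⟨x, rfl⟩ := (Ext.mk₀_bijective _ _).2 x
    exact hM.exists_isKillingApprox_extClass_comp (shortExact_kernel p) x
  | succ r ih =>
    obtain ⟨x, rfl⟩ :=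
      Ext.contravariant_sequence_exact₃ (shortExact_kernel p) A η hη (n₀ := r + 1) (by omega)
    obtain ⟨X'', p', hX'', _⟩ := hM.exists_epi (kernel p)
    obtain ⟨X', j, hj⟩ := ih (by omega) hX'' p' x (hM.ext_eq_zero hX'' hA (by omega) (by omega) _)
    exact ⟨X', j, hj.extClass_comp (shortExact_kernel p) (by omega)
      fun Y hY e => hM.ext_eq_zero hX hY (by omega) (by omega) e⟩

end Approximation

section Realization

lemma extClass_shortExact_pullback {S : ShortComplex C} (hS : S.ShortExact) {B : C}
    (q : B ⟶ S.X₃) :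
    (shortExact_pullback hS q).extClass = (Ext.mk₀ q).comp hS.extClass (zero_add 1) := by
  have h := ShortComplex.ShortExact.extClass_naturality (shortExact_pullback hS q) hS
    { τ₁ := 𝟙 S.X₁
      τ₂ := pullback.fst S.g q
      τ₃ := q
      comm₁₂ := (Category.id_comp _).trans (pullback.lift_fst _ _ _).symm
      comm₂₃ := pullback.condition }
  simpa only [Ext.comp_mk₀_id] using h

/-- Composition with `η ∈ Ext^r(B, K)` is injective on `Ext^i(K, Y)` for `Y ∈ M` and `1 ≤ i < n`.
This is the invariant preserved while `η` is resolved by objects of `M`.  The degree `m` of the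
composite is free because the degrees arising from associativity are only propositionally equal. -/
def DetectsExt (n : ℕ) (M : Set C) {B K : C} {r : ℕ} (η : Ext B K r) : Prop :=
  ∀ Y ∈ M, ∀ i m, 1 ≤ i → i < n → ∀ (h : r + i = m) (x : Ext K Y i), η.comp x h = 0 → x = 0

variable {n : ℕ} {M : Set C}

lemma DetectsExt.of_comp_extClass (hM : IsNClusterTilting n M) {S : ShortComplex C}
    (hS : S.ShortExact) {B : C} {r : ℕ} {η : Ext B S.X₃ r}
    (hf : IsKillingApprox M (η.comp hS.extClass rfl) S.f)
    (hη : DetectsExt n M (η.comp hS.extClass rfl)) : DetectsExt n M η := by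
  rintro Y hY (_ | i) m hi hin hm x hx
  · omega
  obtain ⟨z, rfl⟩ := Ext.contravariant_sequence_exact₃ hS Y x
    (hM.ext_eq_zero hf.mem hY hi hin _) (add_comm 1 i)
  have hz : (η.comp hS.extClass rfl).comp z (by omega : r + 1 + i = m) = 0 :=
    (Ext.comp_assoc _ _ _ _ (add_comm 1 i) (by omega)).trans hx
  obtain rfl | hi' := Nat.eq_zero_or_pos i
  · obtain rfl : m = r + 1 := by omega
    obtain ⟨g, rfl⟩ := (Ext.mk₀_bijective _ _).2 z
    obtain ⟨h, rfl⟩ := hf.exists_fac Y hY g hz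
    rw [← Ext.mk₀_comp_mk₀, hS.extClass_comp_assoc]
  · rw [hη Y hY i m hi' (by omega) _ z hz, Ext.comp_zero]

lemma IsNClusterTilting.mem_of_detectsExt_extClass (hM : IsNClusterTilting n M)
    {S : ShortComplex C} (hS : S.ShortExact) (h₃ : S.X₃ ∈ M)
    (hη : DetectsExt n M hS.extClass) : S.X₂ ∈ M := by
  refine hM.mem_of_ext_eq_zero fun Y hY i h1 hi e => ?_
  have he : (Ext.mk₀ S.f).comp e (zero_add i) = 0 :=
    hη Y hY i _ h1 hi rfl _ (hS.extClass_comp_assoc e)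
  obtain ⟨y, rfl⟩ := Ext.contravariant_sequence_exact₂ hS Y e he
  rw [hM.ext_eq_zero h₃ hY h1 hi y, Ext.comp_zero]

lemma DetectsExt.isYonedaClassOf (hM : IsNClusterTilting n M) {B : C} (hB : B ∈ M) {r : ℕ}
    (hr : r + 1 ≤ n) {K X : C} {η : Ext B K (r + 1)} (hη : DetectsExt n M η) {j : K ⟶ X}
    (hj : IsKillingApprox M η j) : IsYonedaClassOf M η := by
  induction r generalizing K X with
  | zero =>
    have := hj.mono
    have hS := shortExact_cokernel j
    obtain ⟨q, rfl⟩ := Ext.covariant_sequence_exact₁ B hS η hj.comp_eq_zero rfl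
    obtain ⟨q, rfl⟩ := (Ext.mk₀_bijective _ _).2 q
    rw [← extClass_shortExact_pullback hS q] at hη ⊢
    exact isYonedaClassOf_extClass _
      (hM.mem_of_detectsExt_extClass (shortExact_pullback hS q) hB hη)
  | succ r ih =>
    have := hj.mono
    have hS := shortExact_cokernel j
    obtain ⟨η', rfl⟩ := Ext.covariant_sequence_exact₁ B hS η hj.comp_eq_zero rfl
    have hη' : DetectsExt n M η' := .of_comp_extClass hM hS hj hη
    obtain ⟨X', j', hj'⟩ := hM.exists_isKillingApprox_of_lt hB (by omega) (by omega) η'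
    exact (ih (by omega) hη' hj').comp_extClass hS hj.mem

end Realization

/-- Let `𝓔` be an abelian category, `n ≥ 1`, `M` an `n`-cluster tilting
subcategory of `𝓔`, and `ξ : 0 → X⁰ → E¹ → ⋯ → Eⁿ → X^{n+1} → 0` an exact sequence in `𝓔`
with `X⁰, X^{n+1} ∈ M` (middle terms arbitrary).  Then there is an `n`-exact sequence
`0 → X⁰ → X¹ → ⋯ → Xⁿ → X^{n+1} → 0` with all terms in `M` whose Yoneda class in
`Extⁿ(X^{n+1},X⁰)` equals `[ξ]`. -/
theorem exists_n_exact_yoneda_equivalent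
    {C : Type u} [Category.{v} C] [Abelian C] [HasExt.{w} C]
    (n : ℕ) (hn : 1 ≤ n) (M : Set C) (hM : IsNClusterTilting n M)
    (S : ExactExtension C n) (h0 : S.Y 0 ∈ M) (h1 : S.Y (n + 1) ∈ M) :
    ∃ (T : ExactExtension C n) (e0 : T.Y 0 = S.Y 0) (e1 : T.Y (n + 1) = S.Y (n + 1)),
      (∀ i ≤ n + 1, T.Y i ∈ M) ∧ extTransport T.extClass e1 e0 = S.extClass := by
  obtain ⟨r, rfl⟩ : ∃ r, n = r + 1 := ⟨n - 1, by omega⟩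
  have := S.epi_d_last
  obtain ⟨X, p, hX, _⟩ := hM.exists_epi (S.Y (r + 1))
  have hp : (Ext.mk₀ (p ≫ S.d (r + 1))).comp S.extClass (zero_add (r + 1)) = 0 := by
    rw [← Ext.mk₀_comp_mk₀_assoc, S.mk₀_d_comp_extClass, Ext.comp_zero]
  obtain ⟨X', j, hj⟩ :=
    hM.exists_isKillingApprox_of_epi h0 le_rfl hX (p ≫ S.d (r + 1)) S.extClass hp
  have hS : DetectsExt (r + 1) M S.extClass :=
    fun Y hY i _ hi hin _ x _ => hM.ext_eq_zero h0 hY hi hin x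
  exact (hS.isYonedaClassOf hM h1 le_rfl hj).exists_extClass_eq h0 h1

end NZPaper
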